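/- arXiv:2111.10699 — 5 statements merged into one kernel-verified Lean document; each statement's English description precedes it below -/
import Mathlib

section
/- Let V be a finite set, let w⁺, w⁻ : pairs of V → ℝ≥0 be weights, let b : pairs of V → ℝ≥0 be budgets, let α > 0, and let Ĝ = (V, Ê) be a graph on V satisfying: (1) for every pair {i,j} ∈ Ê, w⁻_{ij} ≤ α·b_{ij}, and for every pair {i,j} ∉ Ê, w⁺_{ij} ≤ α·b_{ij}; and (2) for every ordered triple (i,k,j) of distinct vertices with {i,j} ∈ Ê, {j,k} ∈ Ê, and {i,k} ∉ Ê, one has w⁺_{ij} + w⁺_{jk} + w⁻_{ik} ≤ α·(b_{ij} + b_{jk} + b_{ik}). Then there exists a partition C of V such that the total weight of disagreements of C, namely the sum of w⁺_{ij} over pairs {i,j} lying in different parts of C plus the sum of w⁻_{ij} over pairs {i,j} lying in the same part of C, is at most α·∑_{i<j} b_{ij}. -/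
open Finset

/-- The finset of ordered pairs `(i, j)` with `i < j`, representing unordered pairs
of distinct elements of `V`. -/
def pairsLt (V : Type*) [Fintype V] [LinearOrder V] : Finset (V × V) :=
  Finset.univ.filter fun p => p.1 < p.2

/-!
Subtract the budget of each pair from its two weights: the claim becomes that some clustering has
nonpositive total excess. Build it greedily: pick a pivot `k`, make `k` and its neighbours a
cluster, and recurse on the remaining vertices. A pair `{i, j}` settled by the pivot `k` disagrees
with the graph exactly when `k, i, j` span exactly two edges, and all other settled pairs have
nonpositive excess. Each such bad triangle charges each of its three pairs once, when the opposite
vertex is the pivot, and the three charges add up to at most `0`. Hence the charges summed over all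
pivots are nonpositive, and some pivot is charged at most `0` in total.
-/

lemma sum_sum_sum_nonpos_of_rotations {V M : Type*} [AddCommMonoid M] [LinearOrder M]
    [IsOrderedAddMonoid M] (S : Finset V) {f : V → V → V → M}
    (hf : ∀ i j k, f i j k + f j k i + f k i j ≤ 0) :
    ∑ i ∈ S, ∑ j ∈ S, ∑ k ∈ S, f i j k ≤ 0 := by
  have rotate (g : V → V → V → M) :
      ∑ i ∈ S, ∑ j ∈ S, ∑ k ∈ S, g j k i = ∑ i ∈ S, ∑ j ∈ S, ∑ k ∈ S, g i j k := by
    rw [sum_comm]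
    exact sum_congr rfl fun _ _ ↦ sum_comm
  suffices 3 • ∑ i ∈ S, ∑ j ∈ S, ∑ k ∈ S, f i j k ≤ 0 from
    (nsmul_nonpos_iff three_ne_zero).1 this
  calc 3 • ∑ i ∈ S, ∑ j ∈ S, ∑ k ∈ S, f i j k
      = ∑ i ∈ S, ∑ j ∈ S, ∑ k ∈ S, (f i j k + f j k i + f k i j) := by
        simp only [sum_add_distrib, rotate f, rotate fun i j k ↦ f j k i, succ_nsmul, zero_nsmul,
          zero_add]
    _ ≤ 0 := sum_nonpos fun i _ ↦ sum_nonpos fun j _ ↦ sum_nonpos fun k _ ↦ hf i j k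

lemma sum_offDiag_eq_two_nsmul_sum_pairsLt {V M : Type*} [Fintype V] [LinearOrder V]
    [AddCommMonoid M] {f : V → V → M} (hf : ∀ i j, f i j = f j i) :
    ∑ p ∈ univ.offDiag, f p.1 p.2 = 2 • ∑ p ∈ pairsLt V, f p.1 p.2 := by
  have hlt : {p ∈ (univ : Finset V).offDiag | p.1 < p.2} = pairsLt V := by
    ext p
    simpa [pairsLt] using ne_of_lt
  have hgt : ∑ p ∈ (univ : Finset V).offDiag with ¬p.1 < p.2, f p.1 p.2 =
      ∑ p ∈ pairsLt V, f p.1 p.2 := by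
    refine sum_equiv (Equiv.prodComm V V) (fun p ↦ ?_) fun p _ ↦ hf p.1 p.2
    simp only [pairsLt, mem_filter, mem_offDiag, mem_univ, true_and, not_lt, Equiv.prodComm_apply,
      Prod.fst_swap, Prod.snd_swap]
    rw [lt_iff_le_and_ne, and_comm, ne_comm]
  rw [← sum_filter_add_sum_filter_not _ fun p ↦ p.1 < p.2, hgt, hlt, two_nsmul]

section BadTriangle

variable {V : Type*} {G : SimpleGraph V} {i j k : V}

/-- `i, j, k` is an induced path with middle vertex `j`. -/
def IsInducedPath (G : SimpleGraph V) (i j k : V) : Prop :=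
  i ≠ k ∧ G.Adj i j ∧ G.Adj j k ∧ ¬G.Adj i k

/-- `i, j, k` are distinct and span exactly two edges of `G`. These are the triples on which every
clustering disagrees with `G`. -/
def IsBadTriangle (G : SimpleGraph V) (i j k : V) : Prop :=
  IsInducedPath G i j k ∨ IsInducedPath G j k i ∨ IsInducedPath G k i j

/-- The cluster of the pivot `k`: the vertex `k` together with its neighbours. -/
def pivotCluster (G : SimpleGraph V) (k : V) : Set V :=
  insert k (G.neighborSet k)

lemma self_mem_pivotCluster : k ∈ pivotCluster G k :=
  Set.mem_insert ..

lemma isBadTriangle_rotate : IsBadTriangle G j k i ↔ IsBadTriangle G i j k := by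
  unfold IsBadTriangle
  tauto

lemma not_isBadTriangle_right_self : ¬IsBadTriangle G k i i := by
  simp [IsBadTriangle, IsInducedPath]

lemma not_isBadTriangle_of_notMem_pivotCluster (hi : i ∉ pivotCluster G k)
    (hj : j ∉ pivotCluster G k) : ¬IsBadTriangle G k i j := by
  simp_all [IsBadTriangle, IsInducedPath, pivotCluster, G.adj_comm _ k]

lemma isBadTriangle_iff_not_adj_iff_mem_pivotCluster (hij : i ≠ j)
    (h : i ∈ pivotCluster G k ∨ j ∈ pivotCluster G k) :
    IsBadTriangle G k i j ↔ ¬(G.Adj i j ↔ i ∈ pivotCluster G k ∧ j ∈ pivotCluster G k) := by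
  simp only [pivotCluster, Set.mem_insert_iff, SimpleGraph.mem_neighborSet, IsBadTriangle,
    IsInducedPath] at *
  grind [SimpleGraph.adj_comm, SimpleGraph.irrefl]

end BadTriangle

section Pivoting

variable {V M : Type*}

/-- The excesses `s` (for separating a pair) and `t` (for keeping it together) of weight over
budget satisfy the hypotheses of the pivoting argument with respect to the graph `G`: following `G`
on a pair is within budget, and so is violating `G` on all three pairs of an induced path. -/
structure IsWithinBudget [Zero M] [Add M] [LE M] (G : SimpleGraph V)
    (s t : V → V → M) : Prop where
  separate_symm : ∀ i j, s i j = s j i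
  together_symm : ∀ i j, t i j = t j i
  together_nonpos : ∀ i j, G.Adj i j → t i j ≤ 0
  separate_nonpos : ∀ i j, i ≠ j → ¬G.Adj i j → s i j ≤ 0
  path_nonpos : ∀ i j k, IsInducedPath G i j k → s i j + s j k + t i k ≤ 0

open Classical in
/-- The excess of the pair `i, j` in a bad triangle with apex `k`, in case the pair is treated
contrary to `G`; it is `0` if `k, i, j` is not a bad triangle. -/
noncomputable def pivotCharge [Zero M] (G : SimpleGraph V) (s t : V → V → M) (k i j : V) : M :=
  if IsBadTriangle G k i j then if G.Adj i j then s i j else t i j else 0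

/-- The excess of the pair `i, j` in the clustering whose clusters are the fibres of `C`. -/
def pairExcess (s t : V → V → M) (C : V → ℕ) (i j : V) : M :=
  if C i = C j then t i j else s i j

open Classical in
/-- The clustering with the cluster of the pivot `k` split off and the remaining vertices clustered
by `C`. The label `0` is reserved for the new cluster, hence the shift by one. -/
noncomputable def pivotClustering (G : SimpleGraph V) (k : V) (C : V → ℕ) (i : V) : ℕ :=
  if i ∈ pivotCluster G k then 0 else C i + 1

variable {G : SimpleGraph V} {s t : V → V → M} {i j k : V} {C : V → ℕ}

lemma pivotClustering_eq_iff_of_mem (h : i ∈ pivotCluster G k ∨ j ∈ pivotCluster G k) :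
    pivotClustering G k C i = pivotClustering G k C j ↔
      i ∈ pivotCluster G k ∧ j ∈ pivotCluster G k := by
  unfold pivotClustering
  grind

lemma pivotClustering_eq_iff_of_notMem (hi : i ∉ pivotCluster G k) (hj : j ∉ pivotCluster G k) :
    pivotClustering G k C i = pivotClustering G k C j ↔ C i = C j := by
  simp [pivotClustering, hi, hj]

namespace IsWithinBudget

variable [AddCommGroup M] [LinearOrder M]

lemma pairExcess_comm (h : IsWithinBudget G s t) (C : V → ℕ) (i j : V) :
    pairExcess s t C i j = pairExcess s t C j i := by
  simp only [pairExcess, h.separate_symm i j, h.together_symm i j, eq_comm]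

lemma pairExcess_nonpos_of_adj_iff (h : IsWithinBudget G s t) (hij : i ≠ j)
    (hC : G.Adj i j ↔ C i = C j) : pairExcess s t C i j ≤ 0 := by
  by_cases hadj : G.Adj i j
  · rw [pairExcess, if_pos (hC.1 hadj)]
    exact h.together_nonpos i j hadj
  · rw [pairExcess, if_neg (hC.not.1 hadj)]
    exact h.separate_nonpos i j hij hadj

lemma pairExcess_pivotClustering_le_pivotCharge (h : IsWithinBudget G s t) (hij : i ≠ j)
    (hmem : i ∈ pivotCluster G k ∨ j ∈ pivotCluster G k) :
    pairExcess s t (pivotClustering G k C) i j ≤ pivotCharge G s t k i j := by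
  have hbad := isBadTriangle_iff_not_adj_iff_mem_pivotCluster hij hmem
  rw [← pivotClustering_eq_iff_of_mem (C := C) hmem] at hbad
  by_cases hkij : IsBadTriangle G k i j
  · have hviolate := hbad.1 hkij
    rw [pairExcess, pivotCharge, if_pos hkij]
    split_ifs <;> first | rfl | tauto
  · rw [pivotCharge, if_neg hkij]
    exact h.pairExcess_nonpos_of_adj_iff hij (not_not.1 (hbad.not.1 hkij))

open Classical in
lemma pairExcess_pivotClustering_le (h : IsWithinBudget G s t) (hij : i ≠ j) :
    pairExcess s t (pivotClustering G k C) i j ≤ pivotCharge G s t k i j +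
      if i ∉ pivotCluster G k ∧ j ∉ pivotCluster G k then pairExcess s t C i j else 0 := by
  by_cases hout : i ∉ pivotCluster G k ∧ j ∉ pivotCluster G k
  · rw [if_pos hout, pivotCharge,
      if_neg (not_isBadTriangle_of_notMem_pivotCluster hout.1 hout.2), zero_add]
    simp only [pairExcess, pivotClustering_eq_iff_of_notMem hout.1 hout.2, le_refl]
  · rw [if_neg hout, add_zero]
    exact h.pairExcess_pivotClustering_le_pivotCharge hij (by grind)

lemma pivotCharge_add_rotations_nonpos_of_isInducedPath (h : IsWithinBudget G s t)
    (hpath : IsInducedPath G i j k) :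
    pivotCharge G s t i j k + pivotCharge G s t j k i + pivotCharge G s t k i j ≤ 0 := by
  have ⟨_, hij, hjk, hik⟩ := hpath
  have hijk_bad : IsBadTriangle G i j k := .inl hpath
  have hjki_bad := isBadTriangle_rotate.2 hijk_bad
  have hkij_bad := isBadTriangle_rotate.2 hjki_bad
  rw [pivotCharge, pivotCharge, pivotCharge, if_pos hijk_bad, if_pos hjki_bad, if_pos hkij_bad,
    if_pos hjk, if_neg (mt .symm hik), if_pos hij, h.together_symm k i]
  simpa only [add_comm, add_left_comm] using h.path_nonpos i j k hpath

lemma pivotCharge_add_rotations_nonpos (h : IsWithinBudget G s t) (i j k : V) :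
    pivotCharge G s t i j k + pivotCharge G s t j k i + pivotCharge G s t k i j ≤ 0 := by
  by_cases hbad : IsBadTriangle G i j k
  · rcases hbad with hijk | hjki | hkij
    · exact h.pivotCharge_add_rotations_nonpos_of_isInducedPath hijk
    · simpa only [add_comm, add_left_comm] using
        h.pivotCharge_add_rotations_nonpos_of_isInducedPath hjki
    · simpa only [add_comm, add_left_comm] using
        h.pivotCharge_add_rotations_nonpos_of_isInducedPath hkij
  · have hjki := isBadTriangle_rotate.not.2 hbad
    simp [pivotCharge, hbad, hjki, isBadTriangle_rotate.not.2 hjki]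

variable [IsOrderedAddMonoid M]

open Classical in
lemma sum_pairExcess_pivotClustering_le (h : IsWithinBudget G s t) (S : Finset V) (k : V)
    (C : V → ℕ) :
    ∑ p ∈ S.offDiag, pairExcess s t (pivotClustering G k C) p.1 p.2 ≤
      ∑ p ∈ S.offDiag, pivotCharge G s t k p.1 p.2 +
        ∑ p ∈ {i ∈ S | i ∉ pivotCluster G k}.offDiag, pairExcess s t C p.1 p.2 := by
  have hoffDiag : {i ∈ S | i ∉ pivotCluster G k}.offDiag =
      {p ∈ S.offDiag | p.1 ∉ pivotCluster G k ∧ p.2 ∉ pivotCluster G k} := by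
    ext p
    simp only [mem_offDiag, mem_filter]
    tauto
  rw [hoffDiag, sum_filter, ← sum_add_distrib]
  exact sum_le_sum fun p hp ↦ h.pairExcess_pivotClustering_le (mem_offDiag.1 hp).2.2

lemma exists_pivot_sum_pivotCharge_nonpos (h : IsWithinBudget G s t) {S : Finset V}
    (hS : S.Nonempty) :
    ∃ k ∈ S, ∑ p ∈ S.offDiag, pivotCharge G s t k p.1 p.2 ≤ 0 := by
  classical
  have hdiag (k : V) : ∑ p ∈ S.offDiag, pivotCharge G s t k p.1 p.2 =
      ∑ i ∈ S, ∑ j ∈ S, pivotCharge G s t k i j := by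
    rw [← sum_product', ← diag_union_offDiag, sum_union (disjoint_diag_offDiag S), sum_diag]
    simp [pivotCharge, not_isBadTriangle_right_self]
  refine exists_le_of_sum_le hS ?_
  simpa only [hdiag, sum_const_zero] using
    sum_sum_sum_nonpos_of_rotations S h.pivotCharge_add_rotations_nonpos

theorem exists_clustering_sum_pairExcess_nonpos (h : IsWithinBudget G s t)
    (S : Finset V) : ∃ C : V → ℕ, ∑ p ∈ S.offDiag, pairExcess s t C p.1 p.2 ≤ 0 := by
  classical
  induction S using Finset.strongInduction with
  | H S ih =>
    rcases S.eq_empty_or_nonempty with rfl | hS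
    · exact ⟨0, by simp⟩
    obtain ⟨k, hkS, hk⟩ := h.exists_pivot_sum_pivotCharge_nonpos hS
    obtain ⟨C, hC⟩ := ih {i ∈ S | i ∉ pivotCluster G k}
      (filter_ssubset.2 ⟨k, hkS, not_not.2 self_mem_pivotCluster⟩)
    exact ⟨pivotClustering G k C,
      (h.sum_pairExcess_pivotClustering_le S k C).trans (add_nonpos hk hC)⟩

end IsWithinBudget

end Pivoting

theorem stmt0_general {V M : Type*} [Fintype V] [LinearOrder V]
    [AddCommGroup M] [LinearOrder M] [IsOrderedAddMonoid M]
    (wp wm b : V → V → M)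
    (hwpsym : ∀ i j, wp i j = wp j i) (hwmsym : ∀ i j, wm i j = wm j i)
    (hbsym : ∀ i j, b i j = b j i)
    (G : SimpleGraph V)
    (hadj : ∀ i j, G.Adj i j → wm i j ≤ b i j)
    (hnonadj : ∀ i j, i ≠ j → ¬G.Adj i j → wp i j ≤ b i j)
    (hpath : ∀ i j k : V, i ≠ k → G.Adj i j → G.Adj j k → ¬G.Adj i k →
      wp i j + wp j k + wm i k ≤ b i j + b j k + b i k) :
    ∃ C : V → ℕ,
      (∑ p ∈ pairsLt V, if C p.1 = C p.2 then wm p.1 p.2 else wp p.1 p.2)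
        ≤ ∑ p ∈ pairsLt V, b p.1 p.2 := by
  have hbudget : IsWithinBudget G (wp - b) (wm - b) :=
    { separate_symm i j := by simp only [Pi.sub_apply, hwpsym i j, hbsym i j]
      together_symm i j := by simp only [Pi.sub_apply, hwmsym i j, hbsym i j]
      together_nonpos i j hij := sub_nonpos.2 (hadj i j hij)
      separate_nonpos i j hne hij := sub_nonpos.2 (hnonadj i j hne hij)
      path_nonpos i j k := fun ⟨hik, hij, hjk, hnik⟩ ↦ by
        simpa only [Pi.sub_apply, sub_add_sub_comm, sub_nonpos] using hpath i j k hik hij hjk hnik }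
  obtain ⟨C, hC⟩ := hbudget.exists_clustering_sum_pairExcess_nonpos univ
  rw [sum_offDiag_eq_two_nsmul_sum_pairsLt (hbudget.pairExcess_comm C),
    nsmul_nonpos_iff two_ne_zero] at hC
  refine ⟨C, sub_nonpos.1 ?_⟩
  simpa only [pairExcess, Pi.sub_apply, ← ite_sub_ite, ite_self, sum_sub_distrib] using hC

/-- Theorem 3.1 of van Zuylen and Williamson: if a graph `Ĝ` satisfies the two budget
conditions with parameter `α > 0`, then there is a partition (clustering) `C` whose total
weight of disagreements is at most `α · ∑_{i<j} b_{ij}`. -/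
theorem stmt0 {V : Type*} [Fintype V] [LinearOrder V]
    (wp wm b : V → V → ℝ)
    (hwpsym : ∀ i j, wp i j = wp j i) (hwmsym : ∀ i j, wm i j = wm j i)
    (hbsym : ∀ i j, b i j = b j i)
    (hwp0 : ∀ i j, 0 ≤ wp i j) (hwm0 : ∀ i j, 0 ≤ wm i j) (hb0 : ∀ i j, 0 ≤ b i j)
    (α : ℝ) (hα : 0 < α)
    (Ghat : SimpleGraph V)
    (h1a : ∀ i j, Ghat.Adj i j → wm i j ≤ α * b i j)
    (h1b : ∀ i j, i ≠ j → ¬ Ghat.Adj i j → wp i j ≤ α * b i j)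
    (h2 : ∀ i j k : V, i ≠ k → Ghat.Adj i j → Ghat.Adj j k → ¬ Ghat.Adj i k →
      wp i j + wp j k + wm i k ≤ α * (b i j + b j k + b i k)) :
    ∃ C : V → ℕ,
      (∑ p ∈ pairsLt V, if C p.1 = C p.2 then wm p.1 p.2 else wp p.1 p.2)
        ≤ α * ∑ p ∈ pairsLt V, b p.1 p.2 := by
  simpa only [mul_sum] using stmt0_general wp wm (fun i j ↦ α * b i j) hwpsym hwmsym
    (fun i j ↦ congrArg (α * ·) (hbsym i j)) Ghat h1a h1b (by simpa only [mul_add] using h2)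
end

section
/- Let G = (V,E) be a finite simple graph and let x assign to each pair {i,j} of distinct vertices a real number x_{ij} ∈ [0,1] such that x_{ij} ≤ x_{ik} + x_{jk} for every open wedge (i,j,k) centered at k. Then there exists a partition of V whose number of disagreements with respect to G is at most 4·( ∑_{{i,j} ∈ E} x_{ij} + ∑_{{i,j} ∉ E} (1 − x_{ij}) ). -/
open Finset

/-- `(i, j, k)` is an open wedge centered at `k`: `{i,k}` and `{j,k}` are edges but
`{i,j}` is not (with `i ≠ j`). -/
def IsOpenWedge {V : Type*} (G : SimpleGraph V) (i j k : V) : Prop :=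
  G.Adj i k ∧ G.Adj j k ∧ i ≠ j ∧ ¬ G.Adj i j

/-- The number of disagreements of the partition (clustering) `C` with respect to `G`:
pairs `{i,j}` with `{i,j} ∈ E` cut by `C`, or `{i,j} ∉ E` inside a cluster of `C`. -/
def disagreements {V : Type*} [Fintype V] [LinearOrder V]
    (G : SimpleGraph V) [DecidableRel G.Adj] (C : V → ℕ) : ℕ :=
  ((pairsLt V).filter fun p =>
    (G.Adj p.1 p.2 ∧ C p.1 ≠ C p.2) ∨ (¬ G.Adj p.1 p.2 ∧ C p.1 = C p.2)).card

/-!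
Round by deterministic pivoting: call `i` and `j` near when `x i j < 1 / 2`, choose a pivot `k`,
make the vertices near `k` one cluster, and recurse on the rest. A pair is settled by `k` when at
least one of its endpoints is near `k`; its surplus is four times its LP cost minus the mistake made
on it. For any triple, adding up the surplus of each pair settled by the third vertex gives a
nonnegative number. This is termwise unless exactly two of the three pairs are near, and then the
only case in which no pair alone pays for the others is an open wedge, where the wedge constraint
gives total LP cost at least `1`. Averaging over pivots, some pivot settles pairs of nonnegative
total surplus.
-/

section Pivoting

variable {V M : Type*} [AddCommMonoid M]

theorem exists_pivot_sum_nonneg [LinearOrder M] [IsOrderedCancelAddMonoid M]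
    {f : V → V → V → M} (hf : ∀ a b c, 0 ≤ f a b c + f b a c + f c a b)
    {S : Finset V} (hS : S.Nonempty) :
    ∃ k ∈ S, 0 ≤ ∑ i ∈ S, ∑ j ∈ S, f k i j := by
  by_contra! hneg
  have total_neg : ∑ k ∈ S, ∑ i ∈ S, ∑ j ∈ S, f k i j < 0 := sum_neg hneg hS
  have swap : ∑ a ∈ S, ∑ b ∈ S, ∑ c ∈ S, f b a c = ∑ a ∈ S, ∑ b ∈ S, ∑ c ∈ S, f a b c :=
    sum_comm
  have rotate : ∑ a ∈ S, ∑ b ∈ S, ∑ c ∈ S, f c a b = ∑ a ∈ S, ∑ b ∈ S, ∑ c ∈ S, f a b c := by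
    rw [← swap]
    exact sum_congr rfl fun a _ => sum_comm
  have total_nonneg : 0 ≤ ∑ a ∈ S, ∑ b ∈ S, ∑ c ∈ S, (f a b c + f b a c + f c a b) :=
    sum_nonneg fun a _ => sum_nonneg fun b _ => sum_nonneg fun c _ => hf a b c
  simp only [sum_add_distrib, swap, rotate] at total_nonneg
  exact total_nonneg.not_gt (add_neg (add_neg total_neg total_neg) total_neg)

open Classical in
/-- The value collected from the pair `i, j` when the cluster of all vertices near the pivot `k` is
split off, where `s i j T` is the value of the pair if `T` says whether it ends up in one cluster.
Pairs with no endpoint in the cluster are left to later pivots and contribute `0`. -/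
noncomputable def pivotValue (near : V → V → Prop) (s : V → V → Prop → M) (k i j : V) : M :=
  if near k i ∨ near k j then s i j (near k i ∧ near k j) else 0

theorem exists_clustering_of_forall_exists_pivot [PartialOrder M] [IsOrderedAddMonoid M]
    {near : V → V → Prop} (near_refl : ∀ k, near k k) {s : V → V → Prop → M}
    (hpivot : ∀ S : Finset V, S.Nonempty →
      ∃ k ∈ S, 0 ≤ ∑ i ∈ S, ∑ j ∈ S, pivotValue near s k i j)
    (S : Finset V) : ∃ C : V → ℕ, 0 ≤ ∑ i ∈ S, ∑ j ∈ S, s i j (C i = C j) := by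
  classical
  induction S using Finset.strongInduction with
  | H S ih =>
    rcases S.eq_empty_or_nonempty with rfl | hS
    · exact ⟨fun _ => 0, by simp⟩
    obtain ⟨k, hkS, hk⟩ := hpivot S hS
    obtain ⟨C, hC⟩ := ih {i ∈ S | ¬ near k i}
      (filter_ssubset.2 ⟨k, hkS, not_not.2 (near_refl k)⟩)
    let C' : V → ℕ := fun i => if near k i then 0 else C i + 1
    have split_off (i j : V) : s i j (C' i = C' j) = pivotValue near s k i j +
        if ¬ near k i then if ¬ near k j then s i j (C i = C j) else 0 else 0 := by
      by_cases hi : near k i <;> by_cases hj : near k j <;> simp [C', pivotValue, hi, hj]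
    refine ⟨C', ?_⟩
    calc
      0 ≤ ∑ i ∈ S, ∑ j ∈ S, pivotValue near s k i j +
          ∑ i ∈ S with ¬ near k i, ∑ j ∈ S with ¬ near k j, s i j (C i = C j) := add_nonneg hk hC
      _ = ∑ i ∈ S, ∑ j ∈ S, s i j (C' i = C' j) := by
        simp only [split_off, sum_add_distrib, sum_filter, sum_ite_irrel, sum_const_zero]

end Pivoting

theorem sum_sum_eq_two_nsmul_sum_pairsLt {V M : Type*} [Fintype V] [LinearOrder V]
    [AddCommMonoid M] {g : V → V → M} (symm : ∀ i j, g i j = g j i) (diag : ∀ i, g i i = 0) :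
    ∑ i, ∑ j, g i j = 2 • ∑ p ∈ pairsLt V, g p.1 p.2 := by
  have split_by_order (i j : V) :
      g i j = (if i < j then g i j else 0) + (if j < i then g j i else 0) := by
    rcases lt_trichotomy i j with h | rfl | h
    · simp [h, h.not_gt]
    · simp [diag]
    · simp [h, h.not_gt, symm i j]
  have sum_lt : ∑ i, ∑ j, (if i < j then g i j else 0) = ∑ p ∈ pairsLt V, g p.1 p.2 := by
    rw [pairsLt, sum_filter, Fintype.sum_prod_type]
  calc
    ∑ i, ∑ j, g i j = ∑ i, ∑ j, ((if i < j then g i j else 0) + (if j < i then g j i else 0)) :=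
      sum_congr rfl fun i _ => sum_congr rfl fun j _ => split_by_order i j
    _ = ∑ i, ∑ j, (if i < j then g i j else 0) + ∑ j, ∑ i, (if j < i then g j i else 0) := by
      simp only [sum_add_distrib]
      rw [sum_comm (f := fun i j => if j < i then g j i else 0)]
    _ = 2 • ∑ p ∈ pairsLt V, g p.1 p.2 := by rw [sum_lt, two_nsmul]

section Surplus

variable {V R : Type*} [Ring R]

open Classical in
/-- Four times the LP cost of the pair `i, j`, minus `1` if putting it in one cluster exactly when
`T` holds disagrees with `G`. The diagonal is given surplus `0` so that sums may range over all
ordered pairs. -/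
noncomputable def surplus (G : SimpleGraph V) (x : V → V → R) (i j : V) (T : Prop) : R :=
  if i = j then 0 else
    4 * (if G.Adj i j then x i j else 1 - x i j) -
      if (G.Adj i j ∧ ¬ T) ∨ (¬ G.Adj i j ∧ T) then 1 else 0

variable {G : SimpleGraph V} {x : V → V → R} {i j : V}

theorem surplus_self (G : SimpleGraph V) (x : V → V → R) (i : V) (T : Prop) :
    surplus G x i i T = 0 :=
  if_pos rfl

theorem surplus_comm (symm : ∀ i j, x i j = x j i) (i j : V) (T : Prop) :
    surplus G x i j T = surplus G x j i T := by
  rw [surplus, surplus, symm i j, G.adj_comm i j, eq_comm (a := i)]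

theorem surplus_true_of_adj (adj : G.Adj i j) : surplus G x i j True = 4 * x i j := by
  simp [surplus, adj, adj.ne]

theorem surplus_false_of_adj (adj : G.Adj i j) : surplus G x i j False = 4 * x i j - 1 := by
  simp [surplus, adj, adj.ne]

theorem surplus_true_of_not_adj (hij : i ≠ j) (nadj : ¬ G.Adj i j) :
    surplus G x i j True = 4 * (1 - x i j) - 1 := by
  simp [surplus, hij, nadj]

theorem surplus_false_of_not_adj (hij : i ≠ j) (nadj : ¬ G.Adj i j) :
    surplus G x i j False = 4 * (1 - x i j) := by
  simp [surplus, hij, nadj]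

theorem sum_pairsLt_surplus [Fintype V] [LinearOrder V]
    (G : SimpleGraph V) [DecidableRel G.Adj] (x : V → V → R) (C : V → ℕ) :
    ∑ p ∈ pairsLt V, surplus G x p.1 p.2 (C p.1 = C p.2) =
      4 * ∑ p ∈ pairsLt V, (if G.Adj p.1 p.2 then x p.1 p.2 else 1 - x p.1 p.2) -
        disagreements G C := by
  rw [disagreements, natCast_card_filter, mul_sum, ← sum_sub_distrib]
  refine sum_congr rfl fun p hp => ?_
  have ne : p.1 ≠ p.2 := ne_of_lt (mem_filter.1 hp).2
  rw [surplus, if_neg ne]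
  congr

end Surplus

section Rounding

variable {V K : Type*} [Field K] [LinearOrder K]

/-- The rounding threshold: vertices are near when their LP distance is below `1 / 2`. Nearness is
made reflexive because the diagonal values of `x` are arbitrary. -/
def IsNear (x : V → V → K) (i j : V) : Prop := i = j ∨ x i j < 1 / 2

theorem isNear_comm {x : V → V → K} (symm : ∀ i j, x i j = x j i) {i j : V} :
    IsNear x i j ↔ IsNear x j i := by
  rw [IsNear, IsNear, symm i j, eq_comm]

/-- Feasible solutions of the minSTC+ linear program of `G`, as symmetric functions on ordered pairs
whose diagonal values are irrelevant. -/
structure IsMinSTCFeasible (G : SimpleGraph V) (x : V → V → K) : Prop where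
  symm : ∀ i j, x i j = x j i
  nonneg : ∀ i j, i ≠ j → 0 ≤ x i j
  le_one : ∀ i j, i ≠ j → x i j ≤ 1
  wedge : ∀ i j k, IsOpenWedge G i j k → x i j ≤ x i k + x j k

variable [IsStrictOrderedRing K] {G : SimpleGraph V} {x : V → V → K} {i j : V}

theorem neg_one_le_surplus (nonneg : i ≠ j → 0 ≤ x i j) (le_one : i ≠ j → x i j ≤ 1) (T : Prop) :
    -1 ≤ surplus G x i j T := by
  rcases eq_or_ne i j with rfl | hij
  · simp [surplus_self]
  · rw [surplus, if_neg hij]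
    split_ifs <;> linarith [nonneg hij, le_one hij]

theorem surplus_true_nonneg_of_isNear (nonneg : i ≠ j → 0 ≤ x i j) (h : IsNear x i j) :
    0 ≤ surplus G x i j True := by
  rcases eq_or_ne i j with rfl | hij
  · rw [surplus_self]
  · have near : x i j < 1 / 2 := h.resolve_left hij
    by_cases adj : G.Adj i j
    · linarith [surplus_true_of_adj (x := x) adj, nonneg hij]
    · linarith [surplus_true_of_not_adj (x := x) hij adj]

theorem surplus_false_nonneg_of_not_isNear (le_one : i ≠ j → x i j ≤ 1) (h : ¬ IsNear x i j) :
    0 ≤ surplus G x i j False := by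
  obtain ⟨hij, far⟩ := not_or.1 h
  by_cases adj : G.Adj i j
  · linarith [surplus_false_of_adj (x := x) adj]
  · linarith [surplus_false_of_not_adj (x := x) hij adj, le_one hij]

theorem two_le_surplus_true_of_adj_of_not_isNear (adj : G.Adj i j) (h : ¬ IsNear x i j) :
    2 ≤ surplus G x i j True := by
  have far : ¬ x i j < 1 / 2 := (not_or.1 h).2
  linarith [surplus_true_of_adj (x := x) adj]

theorem two_le_surplus_false_of_not_adj_of_isNear (hij : i ≠ j) (nadj : ¬ G.Adj i j)
    (h : IsNear x i j) : 2 ≤ surplus G x i j False := by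
  have near : x i j < 1 / 2 := h.resolve_left hij
  linarith [surplus_false_of_not_adj (x := x) hij nadj]

namespace IsMinSTCFeasible

theorem surplus_add_nonneg_of_isOpenWedge (hx : IsMinSTCFeasible G x) {a b c : V}
    (h : IsOpenWedge G b c a) :
    0 ≤ surplus G x b c True + surplus G x a c False + surplus G x a b False := by
  have wedge : x b c ≤ x b a + x c a := hx.wedge b c a h
  obtain ⟨hba, hca, hbc, nadj⟩ := h
  rw [surplus_true_of_not_adj hbc nadj, surplus_false_of_adj hca.symm,
    surplus_false_of_adj hba.symm, hx.symm a b, hx.symm a c]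
  linarith

theorem surplus_add_nonneg_of_two_isNear (hx : IsMinSTCFeasible G x) {a b c : V}
    (hab : IsNear x a b) (hac : IsNear x a c) (hbc : ¬ IsNear x b c) :
    0 ≤ surplus G x b c True + surplus G x a c False + surplus G x a b False := by
  have ne_ab : a ≠ b := fun h => hbc (h ▸ hac)
  have ne_ac : a ≠ c := fun h => hbc ((isNear_comm hx.symm).1 (h ▸ hab))
  have bc := neg_one_le_surplus (G := G) (hx.nonneg b c) (hx.le_one b c) True
  have ac := neg_one_le_surplus (G := G) (hx.nonneg a c) (hx.le_one a c) False
  have ab := neg_one_le_surplus (G := G) (hx.nonneg a b) (hx.le_one a b) False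
  by_cases adj_bc : G.Adj b c
  · linarith [two_le_surplus_true_of_adj_of_not_isNear adj_bc hbc]
  by_cases adj_ab : G.Adj a b
  · by_cases adj_ac : G.Adj a c
    · exact hx.surplus_add_nonneg_of_isOpenWedge
        ⟨adj_ab.symm, adj_ac.symm, fun h => hbc (.inl h), adj_bc⟩
    · linarith [two_le_surplus_false_of_not_adj_of_isNear ne_ac adj_ac hac]
  · linarith [two_le_surplus_false_of_not_adj_of_isNear ne_ab adj_ab hab]

theorem pivotValue_add_nonneg (hx : IsMinSTCFeasible G x) (a b c : V) :
    0 ≤ pivotValue (IsNear x) (surplus G x) a b c + pivotValue (IsNear x) (surplus G x) b a c +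
      pivotValue (IsNear x) (surplus G x) c a b := by
  have ba : IsNear x b a ↔ IsNear x a b := isNear_comm hx.symm
  have ca : IsNear x c a ↔ IsNear x a c := isNear_comm hx.symm
  have cb : IsNear x c b ↔ IsNear x b c := isNear_comm hx.symm
  have joined {i j : V} (h : IsNear x i j) : 0 ≤ surplus G x i j True :=
    surplus_true_nonneg_of_isNear (hx.nonneg i j) h
  have separated {i j : V} (h : ¬ IsNear x i j) : 0 ≤ surplus G x i j False :=
    surplus_false_nonneg_of_not_isNear (hx.le_one i j) h
  by_cases hab : IsNear x a b <;> by_cases hac : IsNear x a c <;> by_cases hbc : IsNear x b c <;>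
    simp only [pivotValue, ba, ca, cb, hab, hac, hbc, or_true, or_false, or_self, and_true,
      and_false, and_self, if_true, if_false]
  · linarith [joined hab, joined hac, joined hbc]
  · exact hx.surplus_add_nonneg_of_two_isNear hab hac hbc
  · have := hx.surplus_add_nonneg_of_two_isNear (ba.2 hab) hbc hac
    linarith [surplus_comm (G := G) hx.symm a b False]
  · linarith [separated hac, separated hbc]
  · have := hx.surplus_add_nonneg_of_two_isNear (ca.2 hac) (cb.2 hbc) hab
    linarith [surplus_comm (G := G) hx.symm a c False, surplus_comm (G := G) hx.symm b c False]
  · linarith [separated hab, separated hbc]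
  · linarith [separated hab, separated hac]
  · simp

theorem exists_clustering_sum_surplus_nonneg (hx : IsMinSTCFeasible G x) (S : Finset V) :
    ∃ C : V → ℕ, 0 ≤ ∑ i ∈ S, ∑ j ∈ S, surplus G x i j (C i = C j) :=
  exists_clustering_of_forall_exists_pivot (near := IsNear x) (fun _ => .inl rfl)
    (fun _ hS => exists_pivot_sum_nonneg hx.pivotValue_add_nonneg hS) S

end IsMinSTCFeasible

theorem stmt1_general [Fintype V] [LinearOrder V]
    (G : SimpleGraph V) [DecidableRel G.Adj] (x : V → V → K) (hx : IsMinSTCFeasible G x) :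
    ∃ C : V → ℕ,
      (disagreements G C : K)
        ≤ 4 * ∑ p ∈ pairsLt V,
            (if G.Adj p.1 p.2 then x p.1 p.2 else 1 - x p.1 p.2) := by
  obtain ⟨C, hC⟩ := hx.exists_clustering_sum_surplus_nonneg univ
  have surplus_symm (i j : V) : surplus G x i j (C i = C j) = surplus G x j i (C j = C i) := by
    rw [surplus_comm hx.symm, eq_comm (a := C i)]
  rw [sum_sum_eq_two_nsmul_sum_pairsLt surplus_symm fun i => surplus_self G x i _,
    nsmul_nonneg_iff two_ne_zero, sum_pairsLt_surplus, sub_nonneg] at hC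
  exact ⟨C, hC⟩

end Rounding

/-- Rounding the minSTC+ LP relaxation: any feasible fractional solution `x` can be rounded
to a partition with at most `4` times the LP objective many disagreements. -/
theorem stmt1 {V : Type*} [Fintype V] [LinearOrder V]
    (G : SimpleGraph V) [DecidableRel G.Adj]
    (x : V → V → ℝ) (hsym : ∀ i j, x i j = x j i)
    (h01 : ∀ i j, i ≠ j → 0 ≤ x i j ∧ x i j ≤ 1)
    (hwedge : ∀ i j k : V, IsOpenWedge G i j k → x i j ≤ x i k + x j k) :
    ∃ C : V → ℕ,
      (disagreements G C : ℝ)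
        ≤ 4 * ∑ p ∈ pairsLt V,
            (if G.Adj p.1 p.2 then x p.1 p.2 else 1 - x p.1 p.2) :=
  stmt1_general G x
    ⟨hsym, fun i j hij => (h01 i j hij).1, fun i j hij => (h01 i j hij).2, hwedge⟩
end

section
/- Let G = (V,E) be a finite simple graph and let z assign to each edge e ∈ E a real number z_e ∈ [0,1] such that z_{ik} + z_{jk} ≥ 1 for every open wedge (i,j,k) centered at k. Then there exists a partition of V into cliques of G whose number of cut edges is at most 4·∑_{e ∈ E} z_e. -/
open Finset

/-- `C` is a partition of the vertex set into cliques of `G`. -/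
def IsCliquePartition {V : Type*} (G : SimpleGraph V) (C : V → ℕ) : Prop :=
  ∀ i j, i ≠ j → C i = C j → G.Adj i j

/-- The number of cut edges of a partition `C`: edges of `G` whose endpoints lie in
different parts. -/
def cutEdges {V : Type*} [Fintype V] [LinearOrder V]
    (G : SimpleGraph V) [DecidableRel G.Adj] (C : V → ℕ) : ℕ :=
  ((pairsLt V).filter fun p => G.Adj p.1 p.2 ∧ C p.1 ≠ C p.2).card

/-!
Call an edge light if `2 * z e < 1`. Two light edges with a common endpoint never form an open
wedge of `G`, so every star of light edges spans a clique, and it is enough to partition `V` into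
pieces of such stars by repeatedly removing the closed neighbourhood of a pivot in the light graph
`H`. A pivot `k` cuts the light edges that are the far edge of an open wedge of `H` with endpoint
`k`, and joins the nonadjacent pairs that are the endpoints of an open wedge centered at `k`.
Every wedge has one center and, counted with orientation, one initial endpoint, so by averaging
some pivot has at most as many wedges of the first kind as of the second. Hence the light edges
cut are at most twice the pairs joined, all of which are heavy edges of `G`. The cut edges of `G`
are thus at most twice the heavy edges, and each heavy edge has `1 ≤ 2 * z e`.
-/

section Pivot

variable {V : Type*} [DecidableEq V] (H : SimpleGraph V) [DecidableRel H.Adj]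

instance (i j k : V) : Decidable (IsOpenWedge H i j k) :=
  inferInstanceAs (Decidable (_ ∧ _))

/-- The vertex `i` lies in the closed neighbourhood of `k`, the cluster that the pivot `k`
carves out. -/
abbrev InStar {V : Type*} (H : SimpleGraph V) (k i : V) : Prop :=
  i = k ∨ H.Adj k i

/-- Any two vertices of `S` with the same colour lie in a common closed neighbourhood of `H`. -/
def HasStarClusters {V : Type*} (H : SimpleGraph V) (C : V → ℕ) (S : Finset V) : Prop :=
  ∀ i ∈ S, ∀ j ∈ S, C i = C j → ∃ k, InStar H k i ∧ InStar H k j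

/-- The edges of `H` inside `S` that the colouring `C` cuts, each listed in both orientations. -/
def separatedEdges (C : V → ℕ) (S : Finset V) : Finset (V × V) :=
  {p ∈ S ×ˢ S | H.Adj p.1 p.2 ∧ C p.1 ≠ C p.2}

/-- The pairs of distinct nonadjacent vertices of `S` that the colouring `C` puts into one
cluster, each listed in both orientations. -/
def joinedNonedges (C : V → ℕ) (S : Finset V) : Finset (V × V) :=
  {p ∈ S ×ˢ S | p.1 ≠ p.2 ∧ ¬ H.Adj p.1 p.2 ∧ C p.1 = C p.2}

/-- The endpoint pairs `(i, j)` in `S` of the open wedges of `H` centered at `k`. -/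
def wedgesCenteredAt (S : Finset V) (k : V) : Finset (V × V) :=
  {p ∈ S ×ˢ S | IsOpenWedge H p.1 p.2 k}

/-- The pairs `(j, c)` in `S` such that `k` and `j` are the endpoints of an open wedge of `H`
centered at `c`. -/
def wedgesEndingAt (S : Finset V) (k : V) : Finset (V × V) :=
  {p ∈ S ×ˢ S | IsOpenWedge H k p.1 p.2}

/-- The colouring that gives the closed neighbourhood of the pivot `k` the fresh colour `0` and
follows `C`, shifted by one, elsewhere. -/
def pivotColoring (k : V) (C : V → ℕ) (i : V) : ℕ :=
  if InStar H k i then 0 else C i + 1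

variable {H} {C : V → ℕ} {S : Finset V} {k : V}

lemma sum_card_wedgesEndingAt_eq_sum_card_wedgesCenteredAt :
    ∑ k ∈ S, #(wedgesEndingAt H S k) = ∑ k ∈ S, #(wedgesCenteredAt H S k) := by
  simp only [wedgesEndingAt, wedgesCenteredAt, card_filter, sum_product]
  exact sum_comm_cycle

lemma exists_card_wedgesEndingAt_le (hS : S.Nonempty) :
    ∃ k ∈ S, #(wedgesEndingAt H S k) ≤ #(wedgesCenteredAt H S k) :=
  exists_le_of_sum_le hS sum_card_wedgesEndingAt_eq_sum_card_wedgesCenteredAt.le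

lemma pivotColoring_eq_zero_iff {i : V} : pivotColoring H k C i = 0 ↔ InStar H k i := by
  simp only [pivotColoring, ite_eq_left_iff, Nat.add_eq_zero_iff, one_ne_zero, and_false,
    imp_false, not_not]

lemma pivotColoring_eq_iff_of_not_inStar {i j : V} (hi : ¬ InStar H k i) (hj : ¬ InStar H k j) :
    pivotColoring H k C i = pivotColoring H k C j ↔ C i = C j := by
  simp only [pivotColoring, hi, hj, if_false, Nat.add_right_cancel_iff]

lemma hasStarClusters_pivotColoring (hC : HasStarClusters H C {i ∈ S | ¬ InStar H k i}) :
    HasStarClusters H (pivotColoring H k C) S := by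
  intro i hi j hj hij
  have hstar : InStar H k i ↔ InStar H k j := by
    rw [← pivotColoring_eq_zero_iff (C := C), hij, pivotColoring_eq_zero_iff]
  by_cases hki : InStar H k i
  · exact ⟨k, hki, hstar.1 hki⟩
  · have hkj : ¬ InStar H k j := mt hstar.2 hki
    exact hC i (mem_filter.2 ⟨hi, hki⟩) j (mem_filter.2 ⟨hj, hkj⟩)
      ((pivotColoring_eq_iff_of_not_inStar hki hkj).1 hij)

lemma mem_wedgesEndingAt_of_adj {i j : V} (hiS : i ∈ S) (hjS : j ∈ S) (hadj : H.Adj i j)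
    (hki : InStar H k i) (hkj : ¬ InStar H k j) : (j, i) ∈ wedgesEndingAt H S k := by
  obtain ⟨hne, hnadj⟩ := not_or.1 hkj
  rcases hki with rfl | hki
  · exact absurd hadj hnadj
  · exact mem_filter.2 ⟨mk_mem_product hjS hiS, hki, hadj.symm, Ne.symm hne, hnadj⟩

lemma separatedEdges_pivotColoring_subset :
    separatedEdges H (pivotColoring H k C) S ⊆
      separatedEdges H C {i ∈ S | ¬ InStar H k i} ∪
        (wedgesEndingAt H S k ∪ (wedgesEndingAt H S k).image Prod.swap) := by
  rintro ⟨i, j⟩ hp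
  obtain ⟨hpS, hadj, hcolor⟩ := mem_filter.1 hp
  obtain ⟨hiS, hjS⟩ := mem_product.1 hpS
  by_cases hki : InStar H k i <;> by_cases hkj : InStar H k j
  · rw [pivotColoring_eq_zero_iff.2 hki, pivotColoring_eq_zero_iff.2 hkj] at hcolor
    exact absurd rfl hcolor
  · exact mem_union_right _ <| mem_union_right _ <|
      mem_image_of_mem Prod.swap (mem_wedgesEndingAt_of_adj hiS hjS hadj hki hkj)
  · exact mem_union_right _ <| mem_union_left _ <|
      mem_wedgesEndingAt_of_adj hjS hiS hadj.symm hkj hki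
  · exact mem_union_left _ <| mem_filter.2
      ⟨mk_mem_product (mem_filter.2 ⟨hiS, hki⟩) (mem_filter.2 ⟨hjS, hkj⟩), hadj,
        mt (pivotColoring_eq_iff_of_not_inStar hki hkj).2 hcolor⟩

variable (H C S k) in
lemma card_separatedEdges_pivotColoring_le :
    #(separatedEdges H (pivotColoring H k C) S) ≤
      #(separatedEdges H C {i ∈ S | ¬ InStar H k i}) + 2 * #(wedgesEndingAt H S k) := by
  refine (card_le_card separatedEdges_pivotColoring_subset).trans ((card_union_le _ _).trans ?_)
  rw [two_mul]
  gcongr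
  exact (card_union_le _ _).trans (Nat.add_le_add_left card_image_le _)

lemma disjoint_joinedNonedges_wedgesCenteredAt :
    Disjoint (joinedNonedges H C {i ∈ S | ¬ InStar H k i}) (wedgesCenteredAt H S k) := by
  rw [disjoint_left]
  intro p hjoin hwedge
  have hout : ¬ InStar H k p.1 := (mem_filter.1 (mem_product.1 (mem_filter.1 hjoin).1).1).2
  exact hout (.inr (mem_filter.1 hwedge).2.1.symm)

lemma joinedNonedges_union_wedgesCenteredAt_subset :
    joinedNonedges H C {i ∈ S | ¬ InStar H k i} ∪ wedgesCenteredAt H S k ⊆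
      joinedNonedges H (pivotColoring H k C) S := by
  refine union_subset (fun p hp => ?_) fun p hp => ?_
  · obtain ⟨hpS, hne, hnadj, hcolor⟩ := mem_filter.1 hp
    obtain ⟨hi, hj⟩ := mem_product.1 hpS
    obtain ⟨hiS, hki⟩ := mem_filter.1 hi
    obtain ⟨hjS, hkj⟩ := mem_filter.1 hj
    exact mem_filter.2 ⟨mem_product.2 ⟨hiS, hjS⟩, hne, hnadj,
      (pivotColoring_eq_iff_of_not_inStar hki hkj).2 hcolor⟩
  · obtain ⟨hpS, hik, hjk, hne, hnadj⟩ := mem_filter.1 hp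
    refine mem_filter.2 ⟨hpS, hne, hnadj, ?_⟩
    rw [pivotColoring_eq_zero_iff.2 (.inr hik.symm), pivotColoring_eq_zero_iff.2 (.inr hjk.symm)]

variable (H C S k) in
lemma card_joinedNonedges_add_card_wedgesCenteredAt_le :
    #(joinedNonedges H C {i ∈ S | ¬ InStar H k i}) + #(wedgesCenteredAt H S k) ≤
      #(joinedNonedges H (pivotColoring H k C) S) := by
  rw [← card_union_of_disjoint disjoint_joinedNonedges_wedgesCenteredAt]
  exact card_le_card joinedNonedges_union_wedgesCenteredAt_subset

variable (H S) in
theorem exists_hasStarClusters_card_separatedEdges_le :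
    ∃ C : V → ℕ, HasStarClusters H C S ∧
      #(separatedEdges H C S) ≤ 2 * #(joinedNonedges H C S) := by
  induction S using Finset.strongInduction with
  | H S ih =>
    rcases S.eq_empty_or_nonempty with rfl | hS
    · exact ⟨fun _ => 0, by simp [HasStarClusters], by simp [separatedEdges]⟩
    obtain ⟨k, hkS, hwedges⟩ := exists_card_wedgesEndingAt_le (H := H) hS
    obtain ⟨C, hstar, hcard⟩ := ih {i ∈ S | ¬ InStar H k i}
      (filter_ssubset.2 ⟨k, hkS, by simp⟩)
    refine ⟨pivotColoring H k C, hasStarClusters_pivotColoring hstar, ?_⟩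
    have hsep := card_separatedEdges_pivotColoring_le H C S k
    have hjoin := card_joinedNonedges_add_card_wedgesCenteredAt_le H C S k
    lia

end Pivot

section CliquePartition

variable {V : Type*} {G H : SimpleGraph V} [DecidableRel G.Adj] [DecidableRel H.Adj] {C : V → ℕ}
  {S : Finset V}

variable (G H C S) in
lemma card_separatedEdges_le_add_sdiff :
    #(separatedEdges G C S) ≤
      #(separatedEdges H C S) + #(separatedEdges (G \ H) C S) := by
  classical
  refine le_trans (card_le_card fun p => ?_) (card_union_le _ _)
  simp only [separatedEdges, mem_union, mem_filter, SimpleGraph.sdiff_adj]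
  tauto

lemma IsCliquePartition.card_joinedNonedges_add_card_separatedEdges_le [DecidableEq V]
    (hC : IsCliquePartition G C) :
    #(joinedNonedges H C S) + #(separatedEdges (G \ H) C S) ≤
      #{p ∈ S ×ˢ S | (G \ H).Adj p.1 p.2} := by
  have hdisj : Disjoint (joinedNonedges H C S) (separatedEdges (G \ H) C S) := by
    rw [disjoint_left]
    intro p hjoin hsep
    exact (mem_filter.1 hsep).2.2 (mem_filter.1 hjoin).2.2.2
  rw [← card_union_of_disjoint hdisj]
  refine card_le_card (union_subset (fun p hp => ?_) fun p hp => ?_)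
  · obtain ⟨hpS, hne, hnadj, hsame⟩ := mem_filter.1 hp
    exact mem_filter.2 ⟨hpS, hC _ _ hne hsame, hnadj⟩
  · exact mem_filter.2 ⟨(mem_filter.1 hp).1, (mem_filter.1 hp).2.1⟩

lemma IsCliquePartition.card_separatedEdges_le [DecidableEq V] (hC : IsCliquePartition G C)
    (hcut : #(separatedEdges H C S) ≤ 2 * #(joinedNonedges H C S)) :
    #(separatedEdges G C S) ≤ 2 * #{p ∈ S ×ˢ S | (G \ H).Adj p.1 p.2} := by
  have hsplit := card_separatedEdges_le_add_sdiff G H C S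
  have hheavy := hC.card_joinedNonedges_add_card_separatedEdges_le (H := H) (S := S)
  lia

end CliquePartition

section LightGraph

variable {V K : Type*} [CommRing K] [LinearOrder K] (G : SimpleGraph V) (z : V → V → K)
  (hsym : ∀ i j, z i j = z j i)

/-- The subgraph of the edges of `G` with `z`-value below one half. The threshold is written
without division so that `K` need not be a field. -/
def lightGraph : SimpleGraph V where
  Adj i j := G.Adj i j ∧ 2 * z i j < 1
  symm := ⟨fun i j h => ⟨h.1.symm, hsym i j ▸ h.2⟩⟩

instance [DecidableRel G.Adj] : DecidableRel (lightGraph G z hsym).Adj :=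
  fun _ _ => inferInstanceAs (Decidable (_ ∧ _))

variable {G z} [IsStrictOrderedRing K]

lemma HasStarClusters.isCliquePartition [Fintype V] {C : V → ℕ}
    (hC : HasStarClusters (lightGraph G z hsym) C univ)
    (hwedge : ∀ i j k : V, IsOpenWedge G i j k → 1 ≤ z i k + z j k) :
    IsCliquePartition G C := by
  intro i j hne hij
  obtain ⟨k, rfl | hki, rfl | hkj⟩ := hC i (mem_univ i) j (mem_univ j) hij
  · exact absurd rfl hne
  · exact hkj.1
  · exact hki.1.symm
  · by_contra hnadj
    have hone := hwedge i j k ⟨hki.1.symm, hkj.1.symm, hne, hnadj⟩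
    linarith [hki.symm.2, hkj.symm.2]

lemma card_sdiff_lightGraph_le [Fintype V] [DecidableRel G.Adj]
    (hnonneg : ∀ i j, G.Adj i j → 0 ≤ z i j) :
    (#{p : V × V | (G \ lightGraph G z hsym).Adj p.1 p.2} : K) ≤
      2 * ∑ p : V × V with G.Adj p.1 p.2, z p.1 p.2 := by
  have hheavy : ∀ p ∈ ({p | (G \ lightGraph G z hsym).Adj p.1 p.2} : Finset (V × V)),
      G.Adj p.1 p.2 ∧ 1 ≤ 2 * z p.1 p.2 := fun p hp =>
    have hadj := (mem_filter.1 hp).2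
    ⟨hadj.1, not_lt.1 fun hlight => hadj.2 ⟨hadj.1, hlight⟩⟩
  calc (#{p : V × V | (G \ lightGraph G z hsym).Adj p.1 p.2} : K)
      = ∑ p : V × V with (G \ lightGraph G z hsym).Adj p.1 p.2, 1 := by simp
    _ ≤ ∑ p : V × V with (G \ lightGraph G z hsym).Adj p.1 p.2, 2 * z p.1 p.2 :=
      sum_le_sum fun p hp => (hheavy p hp).2
    _ ≤ ∑ p : V × V with G.Adj p.1 p.2, 2 * z p.1 p.2 :=
      sum_le_sum_of_subset_of_nonneg
        (fun p hp => mem_filter.2 ⟨mem_univ p, (hheavy p hp).1⟩)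
        fun p hp _ => mul_nonneg zero_le_two (hnonneg _ _ (mem_filter.1 hp).2)
    _ = 2 * ∑ p : V × V with G.Adj p.1 p.2, z p.1 p.2 := (mul_sum _ _ _).symm

end LightGraph

section OrderedPairs

variable {V : Type*} [Fintype V] [LinearOrder V]

lemma sum_filter_eq_two_nsmul_sum_pairsLt {M : Type*} [AddCommMonoid M] {r : V → V → Prop}
    [DecidableRel r] (hirrefl : ∀ i, ¬ r i i) (hsymm : ∀ i j, r i j → r j i)
    {f : V → V → M} (hf : ∀ i j, f i j = f j i) :
    ∑ p : V × V with r p.1 p.2, f p.1 p.2 =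
      2 • ∑ p ∈ pairsLt V with r p.1 p.2, f p.1 p.2 := by
  have hlt : ∑ p : V × V with r p.1 p.2 ∧ p.1 < p.2, f p.1 p.2 =
      ∑ p ∈ pairsLt V with r p.1 p.2, f p.1 p.2 := by
    rw [pairsLt, filter_filter]
    simp only [and_comm]
  have hgt : ∑ p : V × V with r p.1 p.2 ∧ ¬ p.1 < p.2, f p.1 p.2 =
      ∑ p ∈ pairsLt V with r p.1 p.2, f p.1 p.2 := by
    refine sum_equiv (Equiv.prodComm V V) (fun p => ?_) fun p _ => hf _ _
    simp only [pairsLt, mem_filter, mem_univ, Equiv.prodComm_apply, Prod.fst_swap, Prod.snd_swap,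
      true_and]
    grind
  rw [← sum_filter_add_sum_filter_not _ (fun p => p.1 < p.2), filter_filter, filter_filter, hlt,
    hgt, two_nsmul]

lemma card_separatedEdges_univ_eq_two_mul_cutEdges (G : SimpleGraph V) [DecidableRel G.Adj]
    (C : V → ℕ) : #(separatedEdges G C univ) = 2 * cutEdges G C := by
  simpa only [separatedEdges, cutEdges, univ_product_univ, card_eq_sum_ones, smul_eq_mul] using
    sum_filter_eq_two_nsmul_sum_pairsLt (r := fun i j => G.Adj i j ∧ C i ≠ C j)
      (f := fun _ _ => (1 : ℕ)) (fun i h => h.2 rfl) (fun i j h => ⟨h.1.symm, h.2.symm⟩)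
      (fun _ _ => rfl)

end OrderedPairs

theorem stmt2_general {V K : Type*} [Fintype V] [LinearOrder V] [CommRing K] [LinearOrder K]
    [IsStrictOrderedRing K] (G : SimpleGraph V) [DecidableRel G.Adj]
    (z : V → V → K) (hsym : ∀ i j, z i j = z j i)
    (hnonneg : ∀ i j, G.Adj i j → 0 ≤ z i j)
    (hwedge : ∀ i j k : V, IsOpenWedge G i j k → 1 ≤ z i k + z j k) :
    ∃ C : V → ℕ, IsCliquePartition G C ∧
      (cutEdges G C : K)
        ≤ 4 * ∑ p ∈ (pairsLt V).filter (fun p => G.Adj p.1 p.2), z p.1 p.2 := by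
  obtain ⟨C, hstar, hpivot⟩ :=
    exists_hasStarClusters_card_separatedEdges_le (lightGraph G z hsym) univ
  have hC : IsCliquePartition G C := hstar.isCliquePartition hsym hwedge
  refine ⟨C, hC, ?_⟩
  have hcut : cutEdges G C ≤ #{p : V × V | (G \ lightGraph G z hsym).Adj p.1 p.2} := by
    have hsep := hC.card_separatedEdges_le hpivot
    rw [card_separatedEdges_univ_eq_two_mul_cutEdges, univ_product_univ] at hsep
    lia
  calc (cutEdges G C : K)
      ≤ #{p : V × V | (G \ lightGraph G z hsym).Adj p.1 p.2} := by exact_mod_cast hcut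
    _ ≤ 2 * ∑ p : V × V with G.Adj p.1 p.2, z p.1 p.2 := card_sdiff_lightGraph_le hsym hnonneg
    _ = 4 * ∑ p ∈ pairsLt V with G.Adj p.1 p.2, z p.1 p.2 := by
      rw [sum_filter_eq_two_nsmul_sum_pairsLt (r := G.Adj) (fun _ => G.irrefl)
        (fun _ _ => SimpleGraph.Adj.symm) hsym, nsmul_eq_mul, Nat.cast_ofNat]
      ring

/-- Rounding the minSTC LP relaxation: any feasible fractional solution `z` can be rounded
into a clique partition with at most `4 ∑_e z_e` cut edges. -/
theorem stmt2 {V : Type*} [Fintype V] [LinearOrder V]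
    (G : SimpleGraph V) [DecidableRel G.Adj]
    (z : V → V → ℝ) (hsym : ∀ i j, z i j = z j i)
    (h01 : ∀ i j, G.Adj i j → 0 ≤ z i j ∧ z i j ≤ 1)
    (hwedge : ∀ i j k : V, IsOpenWedge G i j k → 1 ≤ z i k + z j k) :
    ∃ C : V → ℕ, IsCliquePartition G C ∧
      (cutEdges G C : ℝ)
        ≤ 4 * ∑ p ∈ (pairsLt V).filter (fun p => G.Adj p.1 p.2), z p.1 p.2 :=
  stmt2_general G z hsym (fun i j hij => (h01 i j hij).1) hwedge
end

section
/- Let G = (V,E) be a finite simple graph. Let OPT⁺ be the minimum of |E'| + |E_W| over all STC+ labelings (E', E_W) of G, and let OPT^CE be the minimum number of disagreements over all partitions of V (the optimal cluster editing value). Then OPT⁺ ≤ OPT^CE ≤ 2·OPT⁺. -/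
open Finset

/-- `(E', E_W)` is an STC+ labeling of `G`: `E'` consists of non-edge pairs, `E_W` consists
of edges, and every open wedge `(i,j,k)` centered at `k` has `{i,k} ∈ E_W`, `{j,k} ∈ E_W`,
or `{i,j} ∈ E'`. -/
def IsSTCPlusLabeling {V : Type*} (G : SimpleGraph V) (E' EW : Finset (Sym2 V)) : Prop :=
  (∀ e ∈ E', ¬ e.IsDiag ∧ e ∉ G.edgeSet) ∧ (∀ e ∈ EW, e ∈ G.edgeSet) ∧
    (∀ i j k : V, IsOpenWedge G i j k → s(i, k) ∈ EW ∨ s(j, k) ∈ EW ∨ s(i, j) ∈ E')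

/-!
Write a partition as a cluster graph, a disjoint union of cliques, so that its disagreements with
`G` are the edges of the symmetric difference with `G`. If `D` contains a pair of every open wedge
of `G`, it contains a pair of every open wedge of `H = G ∆ D` as well, because an open wedge of
`H` avoiding `D` is one of `G`. Both inequalities use this exchange of `G` and `H`. For a cluster
graph `H` there are no open wedges at all, so `G ∆ H` splits into a labeling of `G` of the same
size.

For a labeling, let `D` consist of its pairs, and build clusters of `H` greedily: choose a pivot
`k`, make its closed `H`-neighbourhood a cluster, and recurse on the remaining vertices. At a pair
meeting that neighbourhood the cluster deviates from `H` exactly when the pair spans an open wedge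
of `H` together with `k`. Each open wedge yields deviations at its three pairs, one for each
choice of pivot, and at least one of the three is a pair of `D`, where the deviation repairs a
disagreement between `H` and `G`. On average over `k`, the new disagreements with `G` are
therefore at most twice the pairs of `D` meeting the neighbourhood, so some pivot achieves this
bound.
-/

open scoped symmDiff

lemma symmDiff_adj_iff {V : Type*} {G H : SimpleGraph V} {i j : V} :
    (G ∆ H).Adj i j ↔ ¬(G.Adj i j ↔ H.Adj i j) := by
  simp only [symmDiff_def, SimpleGraph.sup_adj, SimpleGraph.sdiff_adj]
  tauto

lemma card_symmDiff_add_two_mul_card_inter {α : Type*} [DecidableEq α] (s t : Finset α) :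
    #(s ∆ t) + 2 * #(s ∩ t) = #s + #t := by
  have card_symmDiff : #(s ∆ t) = #(s \ t) + #(t \ s) :=
    card_union_of_disjoint disjoint_sdiff_sdiff
  have card_left := card_sdiff_add_card_inter s t
  have card_right := card_sdiff_add_card_inter t s
  rw [inter_comm] at card_right
  lia

lemma card_le_three_mul_card_filter {α : Type*} {s : Finset α} {f : α → α} {q : α → Prop}
    [DecidablePred q] (hmaps : Set.MapsTo f s s) (hinj : Set.InjOn f s)
    (hq : ∀ a ∈ s, q a ∨ q (f a) ∨ q (f (f a))) :
    #s ≤ 3 * #{a ∈ s | q a} := by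
  classical
  have card_preimage_le {p : α → Prop} [DecidablePred p] :
      #{a ∈ s | p (f a)} ≤ #{a ∈ s | p a} := by
    refine card_le_card_of_injOn f (fun a ha => ?_) (hinj.mono (coe_subset.2 (filter_subset _ _)))
    rw [mem_coe, mem_filter] at ha ⊢
    exact ⟨hmaps ha.1, ha.2⟩
  have cover : s = ({a ∈ s | q a} ∪ {a ∈ s | q (f a)}) ∪ {a ∈ s | q (f (f a))} := by
    rw [← filter_or, ← filter_or, filter_true_of_mem]
    simpa only [or_assoc] using hq
  calc #s ≤ #{a ∈ s | q a} + #{a ∈ s | q (f a)} + #{a ∈ s | q (f (f a))} := by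
        nth_rw 1 [cover]
        exact (card_union_le _ _).trans (Nat.add_le_add_right (card_union_le _ _) _)
    _ ≤ 3 * #{a ∈ s | q a} := by
        have once := card_preimage_le (p := q)
        have twice := card_preimage_le (p := fun a => q (f a))
        lia

/-- The disjoint union of the complete graphs on the fibres of `C`: the graph that cluster editing
turns `G` into when it chooses the partition `C`. -/
def clusterGraph {V α : Type*} (C : V → α) : SimpleGraph V where
  Adj i j := i ≠ j ∧ C i = C j
  symm := ⟨fun _ _ h => ⟨h.1.symm, h.2.symm⟩⟩
  loopless := ⟨fun _ h => h.1 rfl⟩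

lemma not_isOpenWedge_clusterGraph {V α : Type*} (C : V → α) (i j k : V) :
    ¬IsOpenWedge (clusterGraph C) i j k :=
  fun ⟨hik, hjk, hij, hnadj⟩ => hnadj ⟨hij, hik.2.trans hjk.2.symm⟩

/-- Every open wedge of `H` has one of its three pairs in `D`. The edges of the graph `D` stand for
the pairs of an STC+ labeling, weak edges and added non-edges together. -/
def CoversOpenWedges {V : Type*} (H D : SimpleGraph V) : Prop :=
  ∀ i j k : V, IsOpenWedge H i j k → D.Adj i k ∨ D.Adj j k ∨ D.Adj i j

lemma CoversOpenWedges.symmDiff {V : Type*} {G D : SimpleGraph V} (h : CoversOpenWedges G D) :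
    CoversOpenWedges (G ∆ D) D := by
  rintro i j k ⟨hik, hjk, hij, hnadj⟩
  by_contra! ⟨dik, djk, dij⟩
  rw [symmDiff_adj_iff] at hik hjk hnadj
  have wedge : IsOpenWedge G i j k := ⟨by tauto, by tauto, hij, by tauto⟩
  exact (h i j k wedge).elim dik (Or.elim · djk dij)

lemma coversOpenWedges_symmDiff_clusterGraph {V α : Type*} (G : SimpleGraph V) (C : V → α) :
    CoversOpenWedges G (G ∆ clusterGraph C) := by
  have cluster_covered : CoversOpenWedges (clusterGraph C) (G ∆ clusterGraph C) :=
    fun i j k wedge => (not_isOpenWedge_clusterGraph C i j k wedge).elim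
  simpa only [symmDiff_comm G, symmDiff_symmDiff_cancel_left] using cluster_covered.symmDiff

section Pivot

variable {V : Type*} {H D : SimpleGraph V}

/-- `i`, `j`, `k` are the vertices of an open wedge, whichever of them is its centre: the bad
triples that make a clustering of `H` deviate from it. -/
def SpansOpenWedge (H : SimpleGraph V) (i j k : V) : Prop :=
  IsOpenWedge H i j k ∨ IsOpenWedge H j k i ∨ IsOpenWedge H k i j

lemma SpansOpenWedge.rotate {i j k : V} (h : SpansOpenWedge H i j k) : SpansOpenWedge H j k i :=
  or_rotate.1 h

lemma CoversOpenWedges.adj_of_spansOpenWedge (hcov : CoversOpenWedges H D) {i j k : V}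
    (h : SpansOpenWedge H i j k) : D.Adj j k ∨ D.Adj k i ∨ D.Adj i j := by
  rcases h with h | h | h <;> have := hcov _ _ _ h <;> simp only [D.adj_comm] at this ⊢ <;> tauto

/-- The closed neighbourhood of `k`: the cluster that the pivot `k` creates. -/
def closedNeighborSet (H : SimpleGraph V) (k : V) : Set V :=
  insert k (H.neighborSet k)

lemma mem_closedNeighborSet {k i : V} : i ∈ closedNeighborSet H k ↔ i = k ∨ H.Adj k i :=
  Iff.rfl

/-- The cluster graph of the partition into the closed neighbourhood of `k` and its complement. Only
its pairs meeting the neighbourhood matter: there it is the cluster created by the pivot `k`, while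
the vertices of the complement are clustered later. -/
abbrev pivotGraph (H : SimpleGraph V) (k : V) : SimpleGraph V :=
  clusterGraph (· ∈ closedNeighborSet H k)

lemma symmDiff_pivotGraph_adj_iff {i j k : V}
    (hmeet : i ∈ closedNeighborSet H k ∨ j ∈ closedNeighborSet H k) :
    (H ∆ pivotGraph H k).Adj i j ↔ SpansOpenWedge H k i j := by
  have loopless := H.loopless.irrefl
  have symm := H.adj_comm
  simp only [mem_closedNeighborSet] at hmeet
  simp only [symmDiff_adj_iff, clusterGraph, mem_closedNeighborSet, SpansOpenWedge, IsOpenWedge]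
  -- For distinct `i`, `j`, `k`, both sides say that exactly two of the three pairs are edges.
  grind

lemma SpansOpenWedge.mem_closedNeighborSet {i j k : V} (h : SpansOpenWedge H k i j) :
    i ∈ closedNeighborSet H k ∨ j ∈ closedNeighborSet H k := by
  rcases h with ⟨hkj, -⟩ | ⟨hik, -⟩ | ⟨-, hki, -⟩
  · exact .inr (.inr hkj)
  · exact .inl (.inr hik.symm)
  · exact .inl (.inr hki)

open Classical in
/-- The edges of `D` inside `S` with an endpoint in `A`, each counted once in each direction. -/
noncomputable def edgesMeeting (D : SimpleGraph V) (S : Finset V) (A : Set V) : Finset (V × V) :=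
  {p ∈ D.interedges S S | p.1 ∈ A ∨ p.2 ∈ A}

lemma mem_edgesMeeting {S : Finset V} {A : Set V} {p : V × V} :
    p ∈ edgesMeeting D S A ↔ (p.1 ∈ S ∧ p.2 ∈ S ∧ D.Adj p.1 p.2) ∧ (p.1 ∈ A ∨ p.2 ∈ A) := by
  simp only [edgesMeeting, mem_filter, SimpleGraph.mem_interedges_iff]

open Classical in
lemma edgesMeeting_symmDiff (D₁ D₂ : SimpleGraph V) (S : Finset V) (A : Set V) :
    edgesMeeting (D₁ ∆ D₂) S A = edgesMeeting D₁ S A ∆ edgesMeeting D₂ S A := by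
  ext p
  simp only [mem_symmDiff, mem_edgesMeeting, symmDiff_adj_iff]
  tauto

open Classical in
lemma card_edgesMeeting_add_card_interedges_filter_notMem (D : SimpleGraph V) (S : Finset V)
    (A : Set V) :
    #(edgesMeeting D S A) + #(D.interedges {x ∈ S | x ∉ A} {x ∈ S | x ∉ A}) =
      #(D.interedges S S) := by
  have avoiding : D.interedges {x ∈ S | x ∉ A} {x ∈ S | x ∉ A} =
      {p ∈ D.interedges S S | ¬(p.1 ∈ A ∨ p.2 ∈ A)} := by
    ext p
    simp only [SimpleGraph.mem_interedges_iff, mem_filter]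
    tauto
  rw [avoiding, edgesMeeting, card_filter_add_card_filter_not]

/-- The ordered pairs inside `S` at which the cluster of the pivot `k` deviates from `H`. -/
noncomputable def pivotErrors (H : SimpleGraph V) (S : Finset V) (k : V) : Finset (V × V) :=
  edgesMeeting (H ∆ pivotGraph H k) S (closedNeighborSet H k)

lemma mem_pivotErrors {S : Finset V} {k : V} {p : V × V} :
    p ∈ pivotErrors H S k ↔ p.1 ∈ S ∧ p.2 ∈ S ∧ SpansOpenWedge H k p.1 p.2 := by
  rw [pivotErrors, mem_edgesMeeting]
  constructor
  · rintro ⟨⟨h₁, h₂, hadj⟩, hmeet⟩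
    exact ⟨h₁, h₂, (symmDiff_pivotGraph_adj_iff hmeet).1 hadj⟩
  · rintro ⟨h₁, h₂, hspan⟩
    have hmeet := hspan.mem_closedNeighborSet
    exact ⟨⟨h₁, h₂, (symmDiff_pivotGraph_adj_iff hmeet).2 hspan⟩, hmeet⟩

open Classical in
lemma sum_card_pivotErrors_le (hcov : CoversOpenWedges H D) (S : Finset V) :
    ∑ k ∈ S, #(pivotErrors H S k) ≤
      3 * ∑ k ∈ S, #(edgesMeeting D S (closedNeighborSet H k) ∩ pivotErrors H S k) := by
  -- Rotating a triple changes which vertex of the open wedge plays the pivot.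
  let rotate : (_ : V) × (V × V) → (_ : V) × (V × V) := fun t => ⟨t.2.1, t.2.2, t.1⟩
  let triples := S.sigma (pivotErrors H S)
  have mem_triples (t) : t ∈ triples ↔
      t.1 ∈ S ∧ t.2.1 ∈ S ∧ t.2.2 ∈ S ∧ SpansOpenWedge H t.1 t.2.1 t.2.2 := by
    rw [mem_sigma, mem_pivotErrors]
  have rotate_mapsTo : Set.MapsTo rotate triples triples := by
    intro t ht
    rw [mem_coe, mem_triples] at ht ⊢
    exact ⟨ht.2.1, ht.2.2.1, ht.1, ht.2.2.2.rotate⟩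
  have rotate_injective : Function.Injective rotate := by
    rintro ⟨k, i, j⟩ ⟨k', i', j'⟩ h
    simp only [rotate, Sigma.mk.injEq, heq_eq_eq, Prod.mk.injEq] at h ⊢
    tauto
  have triples_covered : {t ∈ triples | D.Adj t.2.1 t.2.2} = S.sigma fun k =>
      edgesMeeting D S (closedNeighborSet H k) ∩ pivotErrors H S k := by
    ext t
    simp only [mem_filter, mem_triples, mem_sigma, mem_inter, mem_edgesMeeting, mem_pivotErrors]
    have := @SpansOpenWedge.mem_closedNeighborSet V H t.2.1 t.2.2 t.1
    tauto
  have card_le := card_le_three_mul_card_filter (q := fun t => D.Adj t.2.1 t.2.2) rotate_mapsTo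
    rotate_injective.injOn fun t ht => hcov.adj_of_spansOpenWedge ((mem_triples t).1 ht).2.2.2
  rwa [triples_covered, card_sigma, card_sigma] at card_le

lemma exists_pivot_card_edgesMeeting_le (hcov : CoversOpenWedges H D) {S : Finset V}
    (hS : S.Nonempty) :
    ∃ k ∈ S, #(edgesMeeting ((H ∆ D) ∆ pivotGraph H k) S (closedNeighborSet H k)) ≤
      2 * #(edgesMeeting D S (closedNeighborSet H k)) := by
  classical
  let flips (k : V) := edgesMeeting D S (closedNeighborSet H k)
  let cost (k : V) := edgesMeeting ((H ∆ D) ∆ pivotGraph H k) S (closedNeighborSet H k)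
  have cost_eq (k : V) : cost k = flips k ∆ pivotErrors H S k := by
    simp only [cost, flips, pivotErrors]
    rw [← edgesMeeting_symmDiff, symmDiff_comm H D, symmDiff_assoc]
  have sum_cost : ∑ k ∈ S, #(cost k) + 2 * ∑ k ∈ S, #(flips k ∩ pivotErrors H S k) =
      ∑ k ∈ S, #(flips k) + ∑ k ∈ S, #(pivotErrors H S k) := by
    simp only [mul_sum, ← sum_add_distrib, cost_eq, card_symmDiff_add_two_mul_card_inter]
  have sum_errors : ∑ k ∈ S, #(pivotErrors H S k) ≤
      3 * ∑ k ∈ S, #(flips k ∩ pivotErrors H S k) := sum_card_pivotErrors_le hcov S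
  have sum_repaired : ∑ k ∈ S, #(flips k ∩ pivotErrors H S k) ≤ ∑ k ∈ S, #(flips k) :=
    sum_le_sum fun _ _ => card_le_card inter_subset_left
  refine exists_le_of_sum_le hS (f := fun k => #(cost k)) (g := fun k => 2 * #(flips k)) ?_
  rw [← mul_sum]
  lia

open Classical in
/-- The partition with the cluster `A`, labelled `0`, and elsewhere the clusters of `C`. -/
noncomputable def prependCluster (A : Set V) (C : V → ℕ) (x : V) : ℕ :=
  if x ∈ A then 0 else C x + 1

lemma clusterGraph_prependCluster_adj_of_mem {A : Set V} {C : V → ℕ} {i j : V}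
    (h : i ∈ A ∨ j ∈ A) :
    (clusterGraph (prependCluster A C)).Adj i j ↔ (clusterGraph (· ∈ A)).Adj i j := by
  simp only [clusterGraph, prependCluster]
  grind

lemma clusterGraph_prependCluster_adj_of_notMem {A : Set V} {C : V → ℕ} {i j : V}
    (hi : i ∉ A) (hj : j ∉ A) :
    (clusterGraph (prependCluster A C)).Adj i j ↔ (clusterGraph C).Adj i j := by
  simp [clusterGraph, prependCluster, hi, hj]

open Classical in
lemma card_interedges_symmDiff_prependCluster (G : SimpleGraph V) (S : Finset V) (A : Set V)
    (C : V → ℕ) :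
    #((G ∆ clusterGraph (prependCluster A C)).interedges S S) =
      #(edgesMeeting (G ∆ clusterGraph (· ∈ A)) S A) +
        #((G ∆ clusterGraph C).interedges {x ∈ S | x ∉ A} {x ∈ S | x ∉ A}) := by
  rw [← card_edgesMeeting_add_card_interedges_filter_notMem _ S A]
  congr 2
  · ext p
    simp only [mem_edgesMeeting, symmDiff_adj_iff]
    refine and_congr_left fun hmeet => ?_
    rw [clusterGraph_prependCluster_adj_of_mem hmeet]
  · ext p
    simp only [SimpleGraph.mem_interedges_iff, mem_filter, symmDiff_adj_iff]
    refine and_congr_right fun h₁ => and_congr_right fun h₂ => ?_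
    rw [clusterGraph_prependCluster_adj_of_notMem h₁.2 h₂.2]

open Classical in
theorem exists_clustering_card_interedges_le (hcov : CoversOpenWedges H D) (S : Finset V) :
    ∃ C : V → ℕ,
      #(((H ∆ D) ∆ clusterGraph C).interedges S S) ≤ 2 * #(D.interedges S S) := by
  induction S using Finset.strongInduction with
  | H S ih =>
    rcases S.eq_empty_or_nonempty with rfl | hS
    · exact ⟨fun _ => 0, by simp [SimpleGraph.interedges, Rel.interedges]⟩
    obtain ⟨k, hkS, cost_le⟩ := exists_pivot_card_edgesMeeting_le hcov hS
    have rest_ssubset : {x ∈ S | x ∉ closedNeighborSet H k} ⊂ S :=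
      filter_ssubset.2 ⟨k, hkS, not_not.2 (Set.mem_insert _ _)⟩
    obtain ⟨C, rest_le⟩ := ih _ rest_ssubset
    refine ⟨prependCluster (closedNeighborSet H k) C, ?_⟩
    rw [card_interedges_symmDiff_prependCluster,
      ← card_edgesMeeting_add_card_interedges_filter_notMem D S (closedNeighborSet H k), mul_add]
    exact Nat.add_le_add cost_le rest_le

end Pivot

lemma card_interedges_univ {V : Type*} [Fintype V] (D : SimpleGraph V) [DecidableRel D.Adj] :
    #(D.interedges univ univ) = 2 * D.edgeSet.ncard := by
  classical
  rw [← SimpleGraph.coe_edgeFinset, Set.ncard_coe_finset, ← D.sum_degrees_eq_twice_card_edges,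
    SimpleGraph.interedges, Rel.interedges, card_filter, univ_product_univ, Fintype.sum_prod_type]
  simp only [← card_filter, ← SimpleGraph.card_neighborFinset_eq_degree,
    SimpleGraph.neighborFinset_eq_filter]

theorem exists_clustering_ncard_edgeSet_le {V : Type*} [Finite V] {G D : SimpleGraph V}
    (hcov : CoversOpenWedges G D) :
    ∃ C : V → ℕ, (G ∆ clusterGraph C).edgeSet.ncard ≤ 2 * D.edgeSet.ncard := by
  classical
  have := Fintype.ofFinite V
  obtain ⟨C, hC⟩ := exists_clustering_card_interedges_le hcov.symmDiff univ
  rw [symmDiff_symmDiff_cancel_right, card_interedges_univ, card_interedges_univ] at hC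
  exact ⟨C, by lia⟩

lemma mem_pairsLt {V : Type*} [Fintype V] [LinearOrder V] {p : V × V} :
    p ∈ pairsLt V ↔ p.1 < p.2 := by
  simp only [pairsLt, mem_filter, mem_univ, true_and]

lemma injOn_sym2_mk_pairsLt (V : Type*) [Fintype V] [LinearOrder V] :
    Set.InjOn (fun p : V × V => s(p.1, p.2)) (pairsLt V) := by
  intro p hp q hq hpq
  rw [mem_coe, mem_pairsLt] at hp hq
  rcases Sym2.eq_iff.1 hpq with ⟨h₁, h₂⟩ | ⟨h₁, h₂⟩
  · exact Prod.ext h₁ h₂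
  · exact absurd (h₁ ▸ h₂ ▸ hp) hq.not_gt

lemma ncard_edgeSet_eq_card_filter_pairsLt {V : Type*} [Fintype V] [LinearOrder V]
    (D : SimpleGraph V) [DecidableRel D.Adj] :
    D.edgeSet.ncard = #{p ∈ pairsLt V | D.Adj p.1 p.2} := by
  have image_eq : (fun p : V × V => s(p.1, p.2)) '' {p | p ∈ pairsLt V ∧ D.Adj p.1 p.2} =
      D.edgeSet := by
    ext ⟨i, j⟩
    constructor
    · rintro ⟨p, hp, hpij⟩
      exact hpij ▸ hp.2
    · intro hadj
      rcases (D.ne_of_adj hadj).lt_or_gt with hlt | hgt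
      · exact ⟨(i, j), ⟨mem_pairsLt.2 hlt, hadj⟩, rfl⟩
      · exact ⟨(j, i), ⟨mem_pairsLt.2 hgt, D.adj_symm hadj⟩, Sym2.eq_swap⟩
  have injOn : Set.InjOn (fun p : V × V => s(p.1, p.2)) {p | p ∈ pairsLt V ∧ D.Adj p.1 p.2} :=
    (injOn_sym2_mk_pairsLt V).mono fun _ hp => hp.1
  rw [← image_eq, injOn.ncard_image, ← coe_filter, Set.ncard_coe_finset]

lemma disagreements_eq_ncard_edgeSet {V : Type*} [Fintype V] [LinearOrder V]
    (G : SimpleGraph V) [DecidableRel G.Adj] (C : V → ℕ) :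
    disagreements G C = (G ∆ clusterGraph C).edgeSet.ncard := by
  classical
  rw [ncard_edgeSet_eq_card_filter_pairsLt, disagreements]
  congr 1
  refine filter_congr fun p hp => ?_
  have hne : p.1 ≠ p.2 := (mem_pairsLt.1 hp).ne
  simp only [symmDiff_adj_iff, clusterGraph, hne, ne_eq, not_false_eq_true, true_and]
  tauto

lemma IsSTCPlusLabeling.coversOpenWedges {V : Type*} {G : SimpleGraph V}
    {E' EW : Finset (Sym2 V)} (h : IsSTCPlusLabeling G E' EW) :
    CoversOpenWedges G (SimpleGraph.fromEdgeSet (E' ∪ EW : Set (Sym2 V))) := by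
  intro i j k wedge
  have hlabel := h.2.2 i j k wedge
  obtain ⟨hik, hjk, hij, -⟩ := wedge
  simp only [SimpleGraph.fromEdgeSet_adj, Set.mem_union, mem_coe]
  have := hik.ne
  have := hjk.ne
  tauto

lemma IsSTCPlusLabeling.exists_disagreements_le {V : Type*} [Fintype V] [LinearOrder V]
    {G : SimpleGraph V} [DecidableRel G.Adj] {E' EW : Finset (Sym2 V)}
    (h : IsSTCPlusLabeling G E' EW) :
    ∃ C : V → ℕ, disagreements G C ≤ 2 * (#E' + #EW) := by
  obtain ⟨C, hC⟩ := exists_clustering_ncard_edgeSet_le h.coversOpenWedges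
  refine ⟨C, ?_⟩
  have edgeSet_subset :
      (SimpleGraph.fromEdgeSet (E' ∪ EW : Set (Sym2 V))).edgeSet ⊆ E' ∪ EW := by
    rw [SimpleGraph.edgeSet_fromEdgeSet]
    exact Set.sdiff_subset
  calc disagreements G C = (G ∆ clusterGraph C).edgeSet.ncard := disagreements_eq_ncard_edgeSet G C
    _ ≤ 2 * (SimpleGraph.fromEdgeSet (E' ∪ EW : Set (Sym2 V))).edgeSet.ncard := hC
    _ ≤ 2 * (E' ∪ EW : Set (Sym2 V)).ncard := by grw [Set.ncard_le_ncard edgeSet_subset]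
    _ ≤ 2 * (#E' + #EW) := by
        grw [Set.ncard_union_le, Set.ncard_coe_finset, Set.ncard_coe_finset]

lemma exists_isSTCPlusLabeling_card_eq {V : Type*} [Finite V] {G K : SimpleGraph V}
    (hcov : CoversOpenWedges G (G ∆ K)) :
    ∃ E' EW : Finset (Sym2 V),
      IsSTCPlusLabeling G E' EW ∧ #E' + #EW = (G ∆ K).edgeSet.ncard := by
  classical
  have := Fintype.ofFinite V
  refine ⟨(K \ G).edgeFinset, (G \ K).edgeFinset, ⟨?_, ?_, ?_⟩, ?_⟩
  · intro e he
    rw [SimpleGraph.mem_edgeFinset, SimpleGraph.edgeSet_sdiff] at he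
    exact ⟨K.not_isDiag_of_mem_edgeSet he.1, he.2⟩
  · intro e he
    rw [SimpleGraph.mem_edgeFinset, SimpleGraph.edgeSet_sdiff] at he
    exact he.1
  · intro i j k wedge
    have hflip := hcov i j k wedge
    obtain ⟨hik, hjk, -, hij⟩ := wedge
    simp only [symmDiff_adj_iff] at hflip
    simp only [SimpleGraph.mem_edgeFinset, SimpleGraph.mem_edgeSet, SimpleGraph.sdiff_adj]
    tauto
  · have hdisj : Disjoint (K \ G).edgeFinset (G \ K).edgeFinset :=
      SimpleGraph.disjoint_edgeFinset.2 disjoint_sdiff_sdiff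
    rw [← card_union_of_disjoint hdisj, ← SimpleGraph.edgeFinset_sup, ← Set.ncard_coe_finset,
      SimpleGraph.coe_edgeFinset, symmDiff_comm]
    rfl

/-- The optimal value of minSTC+ and the optimal cluster editing value satisfy
`OPT⁺ ≤ OPT^CE ≤ 2·OPT⁺`. -/
theorem stmt4 {V : Type*} [Fintype V] [LinearOrder V]
    (G : SimpleGraph V) [DecidableRel G.Adj] :
    sInf {n : ℕ | ∃ E' EW : Finset (Sym2 V),
        IsSTCPlusLabeling G E' EW ∧ n = E'.card + EW.card}
      ≤ sInf {n : ℕ | ∃ C : V → ℕ, n = disagreements G C} ∧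
    sInf {n : ℕ | ∃ C : V → ℕ, n = disagreements G C}
      ≤ 2 * sInf {n : ℕ | ∃ E' EW : Finset (Sym2 V),
          IsSTCPlusLabeling G E' EW ∧ n = E'.card + EW.card} := by
  have clusterings_nonempty : {n : ℕ | ∃ C : V → ℕ, n = disagreements G C}.Nonempty :=
    ⟨_, fun _ => 0, rfl⟩
  have exists_labeling (C : V → ℕ) : ∃ E' EW : Finset (Sym2 V),
      IsSTCPlusLabeling G E' EW ∧ #E' + #EW = disagreements G C := by
    rw [disagreements_eq_ncard_edgeSet]
    exact exists_isSTCPlusLabeling_card_eq (coversOpenWedges_symmDiff_clusterGraph G C)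
  have labelings_nonempty : {n : ℕ | ∃ E' EW : Finset (Sym2 V),
      IsSTCPlusLabeling G E' EW ∧ n = E'.card + EW.card}.Nonempty :=
    let ⟨E', EW, hlabel, _⟩ := exists_labeling fun _ => 0
    ⟨_, E', EW, hlabel, rfl⟩
  constructor
  · obtain ⟨C, hC⟩ := Nat.sInf_mem clusterings_nonempty
    obtain ⟨E', EW, hlabel, hcard⟩ := exists_labeling C
    exact Nat.sInf_le ⟨E', EW, hlabel, hC.trans hcard.symm⟩
  · obtain ⟨E', EW, hlabel, hcard⟩ := Nat.sInf_mem labelings_nonempty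
    obtain ⟨C, hC⟩ := hlabel.exists_disagreements_le
    rw [hcard]
    exact le_trans (Nat.sInf_le ⟨C, rfl⟩) hC
end

section
/- Let G = (V,E) be a finite simple graph and let x assign to each pair {i,j} of distinct vertices a real number x_{ij} ∈ [0,1] such that x_{ij} ≤ x_{ik} + x_{jk} for every open wedge (i,j,k) centered at k. For each pair {i,j} define the budget b_{ij} = x_{ij} if {i,j} ∈ E and b_{ij} = 1 − x_{ij} if {i,j} ∉ E. Then for every ordered triple (i,j,k) of distinct vertices with x_{ij} < 1/2, x_{jk} < 1/2, and x_{ik} ≥ 1/2, one has 1_{{i,j} ∈ E} + 1_{{j,k} ∈ E} + 1_{{i,k} ∉ E} ≤ 4·(b_{ij} + b_{jk} + b_{ik}), where 1_{·} denotes the 0/1 indicator. -/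
open Finset

/-!
Each of the three pairs either has indicator `1`, or has indicator `0` and budget at least `1/2`: a
non-edge with `x ≤ 1/2` and an edge with `1/2 ≤ x` are both expensive. Since budgets are
nonnegative, the indicator sum `m` and the total budget `B` satisfy `3 - m ≤ 2 * B`, so `m ≤ 2`
gives `m ≤ 6 - 2 * m ≤ 4 * B`. If `m = 3`, then `(i, k, j)` is an open wedge, and its LP constraint
says exactly that `1 ≤ B`.
-/

section Budget

variable {V K : Type*} [CommRing K] (G : SimpleGraph V) [DecidableRel G.Adj]

/-- The budget `b_{ij}` of the pair `{i, j}` under the fractional solution `x`, that is, its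
contribution to the LP objective: `x_{ij}` for an edge, `1 - x_{ij}` for a non-edge. The value at
`i = j` is the non-edge one. -/
def budget (x : V → V → K) (i j : V) : K :=
  if G.Adj i j then x i j else 1 - x i j

variable {G} {x : V → V → K} {i j k : V}

theorem budget_of_adj (h : G.Adj i j) : budget G x i j = x i j :=
  if_pos h

theorem budget_of_not_adj (h : ¬G.Adj i j) : budget G x i j = 1 - x i j :=
  if_neg h

theorem budget_comm (hx : x i j = x j i) : budget G x i j = budget G x j i := by
  simp only [budget, G.adj_comm i j, hx]

theorem one_le_add_budget_of_isOpenWedge [LinearOrder K] [IsStrictOrderedRing K]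
    (hw : IsOpenWedge G i j k) (hx : x i j ≤ x i k + x j k) :
    1 ≤ budget G x i k + budget G x j k + budget G x i j := by
  obtain ⟨hik, hjk, -, hij⟩ := hw
  rw [budget_of_adj hik, budget_of_adj hjk, budget_of_not_adj hij]
  linarith

end Budget

section Charging

variable {V K : Type*} [Field K] [LinearOrder K] [IsStrictOrderedRing K] {G : SimpleGraph V}
  [DecidableRel G.Adj] {x : V → V → K} {i j : V}

theorem one_sub_adj_indicator_le_two_mul_budget (h0 : G.Adj i j → 0 ≤ x i j)
    (hshort : x i j ≤ 1 / 2) :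
    1 - (if G.Adj i j then (1 : K) else 0) ≤ 2 * budget G x i j := by
  by_cases h : G.Adj i j
  · rw [if_pos h, budget_of_adj h]
    linarith [h0 h]
  · rw [if_neg h, budget_of_not_adj h]
    linarith

theorem one_sub_not_adj_indicator_le_two_mul_budget (h1 : ¬G.Adj i j → x i j ≤ 1)
    (hlong : 1 / 2 ≤ x i j) :
    1 - (if G.Adj i j then (0 : K) else 1) ≤ 2 * budget G x i j := by
  by_cases h : G.Adj i j
  · rw [if_pos h, budget_of_adj h]
    linarith
  · rw [if_neg h, budget_of_not_adj h]
    linarith [h1 h]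

end Charging

theorem add_indicator_le_two_of_not_isOpenWedge {V K : Type*} [Semiring K] [PartialOrder K]
    [IsOrderedRing K] {G : SimpleGraph V} [DecidableRel G.Adj] {i j k : V} (hij : i ≠ j)
    (hw : ¬IsOpenWedge G i j k) :
    (if G.Adj i k then (1 : K) else 0) + (if G.Adj j k then (1 : K) else 0) +
      (if G.Adj i j then (0 : K) else 1) ≤ 2 := by
  have not_all : ¬(G.Adj i k ∧ G.Adj j k ∧ ¬G.Adj i j) :=
    fun ⟨hik, hjk, hnot⟩ ↦ hw ⟨hik, hjk, hij, hnot⟩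
  split_ifs <;> first | tauto | norm_num

theorem stmt18_general {V K : Type*} [Field K] [LinearOrder K] [IsStrictOrderedRing K]
    (G : SimpleGraph V) [DecidableRel G.Adj] (x : V → V → K) (hsym : ∀ i j, x i j = x j i)
    (hedge : ∀ i j, G.Adj i j → 0 ≤ x i j)
    (hnonedge : ∀ i j, i ≠ j → ¬G.Adj i j → x i j ≤ 1)
    (hwedge : ∀ i j k : V, IsOpenWedge G i j k → x i j ≤ x i k + x j k)
    (i j k : V) (hik : i ≠ k) (hxij : x i j ≤ 1 / 2) (hxjk : x j k ≤ 1 / 2)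
    (hxik : 1 / 2 ≤ x i k) :
    (if G.Adj i j then (1 : K) else 0) + (if G.Adj j k then (1 : K) else 0) +
        (if G.Adj i k then (0 : K) else 1)
      ≤ 4 * (budget G x i j + budget G x j k + budget G x i k) := by
  by_cases hw : IsOpenWedge G i k j
  · have budget_ge : 1 ≤ budget G x i j + budget G x j k + budget G x i k := by
      rw [budget_comm (hsym j k)]
      exact one_le_add_budget_of_isOpenWedge hw (hwedge i k j hw)
    rw [if_pos hw.1, if_pos hw.2.1.symm, if_neg hw.2.2.2]
    linarith
  · have indicators_le := add_indicator_le_two_of_not_isOpenWedge (K := K) hik hw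
    simp only [G.adj_comm k j] at indicators_le
    have charge_ij := one_sub_adj_indicator_le_two_mul_budget (hedge i j) hxij
    have charge_jk := one_sub_adj_indicator_le_two_mul_budget (hedge j k) hxjk
    have charge_ik := one_sub_not_adj_indicator_le_two_mul_budget (hnonedge i k hik) hxik
    linarith

/-- Given a feasible solution `x` of the minSTC+ LP relaxation, with budgets
`b_{ij} = x_{ij}` for edges and `b_{ij} = 1 - x_{ij}` for non-edges, every ordered triple
`(i, j, k)` of distinct vertices with `x_{ij} < 1/2`, `x_{jk} < 1/2` and `x_{ik} ≥ 1/2`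
satisfies `1_{{i,j} ∈ E} + 1_{{j,k} ∈ E} + 1_{{i,k} ∉ E} ≤ 4 (b_{ij} + b_{jk} + b_{ik})`. -/
theorem stmt18 {V : Type*} [Fintype V]
    (G : SimpleGraph V) [DecidableRel G.Adj]
    (x : V → V → ℝ) (hsym : ∀ i j, x i j = x j i)
    (h01 : ∀ i j, i ≠ j → 0 ≤ x i j ∧ x i j ≤ 1)
    (hwedge : ∀ i j k : V, IsOpenWedge G i j k → x i j ≤ x i k + x j k) :
    ∀ i j k : V, i ≠ j → j ≠ k → i ≠ k →
      x i j < 1 / 2 → x j k < 1 / 2 → 1 / 2 ≤ x i k →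
      (if G.Adj i j then (1 : ℝ) else 0) + (if G.Adj j k then (1 : ℝ) else 0) +
          (if G.Adj i k then (0 : ℝ) else 1)
        ≤ 4 * ((if G.Adj i j then x i j else 1 - x i j) +
               (if G.Adj j k then x j k else 1 - x j k) +
               (if G.Adj i k then x i k else 1 - x i k)) := fun i j k _ _ hik hxij hxjk hxik ↦
  stmt18_general G x hsym (fun i j h ↦ (h01 i j h.ne).1) (fun i j h _ ↦ (h01 i j h).2) hwedge
    i j k hik hxij.le hxjk.le hxik
end
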